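/- Let S ≥ 1, let χ_i be the indicator function of [(i−1)/S, i/S) ⊂ [0,1), let A_i, B_{ij} ∈ ℂ, and let 𝒜 : L²([0,1)) → L²([0,1)) be the operator 𝒜u(x) = A(x)u(x) + ∫₀¹ B(x,y)u(y)dy with A(x) = ∑_{i=1}^S A_i χ_i(x) and B(x,y) = S ∑_{i,j=1}^S B_{ij} χ_i(x)χ_j(y), and put 𝐀 = diag(A_1,...,A_S), 𝐁 = (B_{ij})_{i,j=1}^S. Then for every complex polynomial f, the operator f(𝒜) (obtained by substituting 𝒜 into f, with constant term times the identity operator) is given by f(𝒜)u(x) = χᵀ(x)f(𝐀)χ(x)u(x) + S ∫₀¹ χᵀ(x)(f(𝐀+𝐁) − f(𝐀))χ(y)u(y)dy, where χ(x) = (χ_1(x),...,χ_S(x))ᵀ and f(𝐀), f(𝐀+𝐁) are the matrix evaluations of f. -/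

import Mathlib

/-!
STATEMENT 19: Polynomial functional calculus for the operator
𝒜u(x) = A(x)u(x) + ∫₀¹B(x,y)u(y)dy on L²([0,1)) with S-step data:
f(𝒜)u(x) = χᵀ(x)f(𝐀)χ(x)u(x) + S∫₀¹ χᵀ(x)(f(𝐀+𝐁) − f(𝐀))χ(y)u(y)dy.
-/

open MeasureTheory Finset

noncomputable section

namespace Stmt19

/-- The step function `χ_i`, the indicator of the `i`-th subinterval of `[0,1)`
of length `1/S` (the subintervals are indexed by `i = 0,...,S−1`). -/
def chi (S : ℕ) (i : Fin S) (x : ℝ) : ℂ :=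
  if x ∈ Set.Ico ((i : ℝ) / S) (((i : ℝ) + 1) / S) then (1 : ℂ) else 0

/-- The pointwise formula of the operator
`𝒜u(x) = A(x)u(x) + ∫₀¹ B(x,y)u(y)dy` with the `S`-step multiplier
`A(x) = ∑_i A_i χ_i(x)` and the `S`-step kernel
`B(x,y) = S ∑_{i,j} B_{ij} χ_i(x) χ_j(y)`. -/
def Tformula (S : ℕ) (A : Fin S → ℂ) (B : Fin S → Fin S → ℂ)
    (u : ℝ → ℂ) : ℝ → ℂ :=
  fun x => (∑ i, A i * chi S i x) * u x +
    ∫ y in Set.Ico (0 : ℝ) 1,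
      ((S : ℂ) * ∑ i, ∑ j, B i j * chi S i x * chi S j y) * u y

/-!
Split `u` on each cell of the partition into its mean and its mean-zero part. The operator `𝒜`
multiplies the mean-zero part on the `i`-th cell by `A i` and acts on the vector of cell means as
the matrix `𝐀 + 𝐁`. Operators of this shape are composed by multiplying the multipliers and the
matrices separately, so `f(𝒜)` multiplies the mean-zero parts by `f (A i)` and acts on the cell
means as `f(𝐀 + 𝐁)`.
-/

open scoped ENNReal

lemma aeval_diagonal {R ι : Type*} [CommSemiring R] [Fintype ι] [DecidableEq ι] (d : ι → R)
    (f : Polynomial R) : f.aeval (Matrix.diagonal d) = Matrix.diagonal (f.aeval d) :=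
  Polynomial.aeval_algHom_apply (Matrix.diagonalAlgHom R) d f

lemma average_const_mul_sub_average_add_const {X 𝕜 : Type*} [MeasurableSpace X] [RCLike 𝕜]
    {μ : Measure X} [IsFiniteMeasure μ] [NeZero μ] {u : X → 𝕜} (hu : Integrable u μ) (c m : 𝕜) :
    ⨍ x, (c * (u x - ⨍ y, u y ∂μ) + m) ∂μ = m := by
  have mean_zero_integrable : Integrable (fun x => c * (u x - ⨍ y, u y ∂μ)) μ :=
    (hu.sub (integrable_const _)).const_mul c
  rw [average_eq, integral_add mean_zero_integrable (integrable_const m), integral_const_mul,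
    integral_sub_average, mul_zero, zero_add, ← average_eq, average_const]

section StepOperators

variable {X ι 𝕜 : Type*} [MeasurableSpace X] [RCLike 𝕜]

/-- The vector of mean values of `u` over the cells `s i`. -/
def cellAverages (μ : Measure X) (s : ι → Set X) (u : X → 𝕜) (i : ι) : 𝕜 :=
  ⨍ y in s i, u y ∂μ

variable [Fintype ι]

/-- The pointwise formula of the operator with step multiplier `D` and step kernel
`∑ i, ∑ j, χ_i(x) K_{ij} χ_j(y) / μ (s j)`, where `χ_i` is the indicator of `s i`. The weight
`1 / μ (s j)` makes the integral over the `j`-th cell a mean value; it is the factor `S` when the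
cells are `S` intervals of length `1 / S`. -/
def stepFormula (μ : Measure X) (s : ι → Set X) (D : ι → 𝕜) (K : Matrix ι ι 𝕜)
    (u : X → 𝕜) (x : X) : 𝕜 :=
  (∑ i, D i * (s i).indicator 1 x) * u x +
    ∫ y, (∑ i, ∑ j, (s i).indicator 1 x * K i j *
      ((μ.real (s j) : 𝕜)⁻¹ * (s j).indicator 1 y)) * u y ∂μ

variable {μ : Measure X} {s : ι → Set X} {p : ℝ≥0∞} [Fact (1 ≤ p)]

/-- `T` multiplies the mean-zero part of a function on the cell `s i` by `D i` and acts on the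
vector of cell means as the matrix `N`. -/
def ActsOnCells (s : ι → Set X) (T : Lp 𝕜 p μ →L[𝕜] Lp 𝕜 p μ) (D : ι → 𝕜)
    (N : Matrix ι ι 𝕜) : Prop :=
  ∀ (u : Lp 𝕜 p μ) (i : ι), ∀ᵐ x ∂μ.restrict (s i),
    T u x = D i * (u x - cellAverages μ s u i) + N.mulVec (cellAverages μ s u) i

namespace ActsOnCells

variable {T T' : Lp 𝕜 p μ →L[𝕜] Lp 𝕜 p μ} {D D' : ι → 𝕜} {N N' : Matrix ι ι 𝕜}

lemma algebraMap [DecidableEq ι] (c : 𝕜) :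
    ActsOnCells s (algebraMap 𝕜 (Lp 𝕜 p μ →L[𝕜] Lp 𝕜 p μ) c) (algebraMap 𝕜 (ι → 𝕜) c)
      (algebraMap 𝕜 (Matrix ι ι 𝕜) c) := by
  intro u i
  filter_upwards [ae_restrict_of_ae (Lp.coeFn_smul c u)] with x hx
  simp only [ContinuousLinearMap.algebraMap_apply, hx, Pi.smul_apply, smul_eq_mul,
    Pi.algebraMap_apply, Algebra.algebraMap_self_apply, Matrix.algebraMap_eq_diagonal,
    Matrix.mulVec_diagonal]
  ring

lemma add (hT : ActsOnCells s T D N) (hT' : ActsOnCells s T' D' N') :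
    ActsOnCells s (T + T') (D + D') (N + N') := by
  intro u i
  filter_upwards [hT u i, hT' u i, ae_restrict_of_ae (Lp.coeFn_add (T u) (T' u))] with x h h' hadd
  rw [add_apply, hadd, Pi.add_apply, h, h', Matrix.add_mulVec, Pi.add_apply, Pi.add_apply]
  ring

lemma cellAverages_apply (h0 : ∀ i, μ (s i) ≠ 0) (hfin : ∀ i, μ (s i) ≠ ∞)
    (hT : ActsOnCells s T D N) (u : Lp 𝕜 p μ) :
    cellAverages μ s (T u) = N.mulVec (cellAverages μ s u) := by
  ext i
  have : IsFiniteMeasure (μ.restrict (s i)) := isFiniteMeasure_restrict.2 (hfin i)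
  have : NeZero (μ.restrict (s i)) := ⟨Measure.restrict_eq_zero.not.2 (h0 i)⟩
  have u_integrable : IntegrableOn u (s i) μ :=
    integrableOn_Lp_of_measure_ne_top u Fact.out (hfin i)
  exact (average_congr (hT u i)).trans
    (average_const_mul_sub_average_add_const u_integrable _ _)

lemma mul (h0 : ∀ i, μ (s i) ≠ 0) (hfin : ∀ i, μ (s i) ≠ ∞)
    (hT : ActsOnCells s T D N) (hT' : ActsOnCells s T' D' N') :
    ActsOnCells s (T * T') (D * D') (N * N') := by
  intro u i
  filter_upwards [hT (T' u) i, hT' u i] with x h h'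
  rw [mul_apply_eq_comp, h, h', hT'.cellAverages_apply h0 hfin, Matrix.mulVec_mulVec,
    Pi.mul_apply]
  ring

end ActsOnCells

variable (𝕜 p) in
/-- The triples `(T, D, N)` such that `T` acts on the cells by `D` and `N`, as a subalgebra of the
product algebra: closure under products is the multiplicativity of the correspondence. -/
def cellActionSubalgebra [DecidableEq ι] (h0 : ∀ i, μ (s i) ≠ 0) (hfin : ∀ i, μ (s i) ≠ ∞) :
    Subalgebra 𝕜 ((Lp 𝕜 p μ →L[𝕜] Lp 𝕜 p μ) × (ι → 𝕜) × Matrix ι ι 𝕜) where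
  carrier := {a | ActsOnCells s a.1 a.2.1 a.2.2}
  mul_mem' := .mul h0 hfin
  add_mem' := .add
  algebraMap_mem' := .algebraMap

lemma ActsOnCells.aeval [DecidableEq ι] (h0 : ∀ i, μ (s i) ≠ 0) (hfin : ∀ i, μ (s i) ≠ ∞)
    {T : Lp 𝕜 p μ →L[𝕜] Lp 𝕜 p μ} {D : ι → 𝕜} {N : Matrix ι ι 𝕜}
    (hT : ActsOnCells s T D N) (f : Polynomial 𝕜) :
    ActsOnCells s (f.aeval T) (f.aeval D) (f.aeval N) := by
  have aeval_mem : f.aeval (T, D, N) ∈ cellActionSubalgebra 𝕜 p h0 hfin :=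
    Algebra.adjoin_le (Set.singleton_subset_iff.2 hT) (Polynomial.aeval_mem_adjoin_singleton 𝕜 _)
  rwa [Polynomial.aeval_prod_apply, Polynomial.aeval_prod_apply] at aeval_mem

lemma stepFormula_apply_of_mem [DecidableEq ι] (hs : ∀ i, MeasurableSet (s i))
    (hdisj : Pairwise (Function.onFun Disjoint s)) (D : ι → 𝕜) (K : Matrix ι ι 𝕜) {u : X → 𝕜}
    (hu : ∀ i, IntegrableOn u (s i) μ) {k : ι} {x : X} (hx : x ∈ s k) :
    stepFormula μ s D K u x = D k * (u x - cellAverages μ s u k) +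
      (Matrix.diagonal D + K).mulVec (cellAverages μ s u) k := by
  have indicator_eq (i : ι) : (s i).indicator (1 : X → 𝕜) x = if i = k then 1 else 0 := by
    split_ifs with hik
    · simp [hik, hx]
    · exact Set.indicator_of_notMem (fun hi => (hdisj hik).notMem_of_mem_left hi hx) _
  have kernel_eq (y : X) : (∑ i, ∑ j, (if i = k then 1 else 0) * K i j *
      ((μ.real (s j) : 𝕜)⁻¹ * (s j).indicator 1 y)) * u y =
      ∑ j, K k j * (μ.real (s j) : 𝕜)⁻¹ * (s j).indicator u y := by
    simp only [ite_mul, one_mul, zero_mul, Finset.sum_ite_irrel, Finset.sum_const_zero,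
      Finset.sum_ite_eq', Finset.mem_univ, if_true, Finset.sum_mul]
    refine Finset.sum_congr rfl fun j _ => ?_
    by_cases hy : y ∈ s j <;> simp [hy, mul_assoc]
  have integral_eq : ∫ y, ∑ j, K k j * (μ.real (s j) : 𝕜)⁻¹ * (s j).indicator u y ∂μ =
      K.mulVec (cellAverages μ s u) k := by
    rw [integral_finsetSum _ fun j _ => ((integrable_indicator_iff (hs j)).2 (hu j)).const_mul _]
    refine Finset.sum_congr rfl fun j _ => ?_
    rw [integral_const_mul, integral_indicator (hs j), cellAverages, setAverage_eq,
      RCLike.real_smul_eq_coe_mul, RCLike.ofReal_inv, mul_assoc]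
  simp only [stepFormula, indicator_eq, kernel_eq, integral_eq, Matrix.add_mulVec, Pi.add_apply,
    Matrix.mulVec_diagonal, mul_ite, mul_one, mul_zero, Finset.sum_ite_eq', Finset.mem_univ,
    if_true]
  ring

lemma actsOnCells_iff_ae_eq_stepFormula [DecidableEq ι] (hs : ∀ i, MeasurableSet (s i))
    (hdisj : Pairwise (Function.onFun Disjoint s)) (hcover : ∀ᵐ x ∂μ, ∃ i, x ∈ s i)
    (hfin : ∀ i, μ (s i) ≠ ∞) {T : Lp 𝕜 p μ →L[𝕜] Lp 𝕜 p μ} {D : ι → 𝕜} {K : Matrix ι ι 𝕜} :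
    ActsOnCells s T D (Matrix.diagonal D + K) ↔ ∀ u, T u =ᵐ[μ] stepFormula μ s D K u := by
  refine forall_congr' fun u => ?_
  have formula_eq {i : ι} {x : X} (hx : x ∈ s i) :=
    stepFormula_apply_of_mem (u := u) hs hdisj D K
      (fun j => integrableOn_Lp_of_measure_ne_top u Fact.out (hfin j)) hx
  simp only [ae_restrict_iff' (hs _), ← ae_all_iff]
  constructor <;> intro h
  · filter_upwards [h, hcover] with x hx ⟨i, hi⟩
    rw [hx i hi, formula_eq hi]
  · filter_upwards [h] with x hx i hi
    rw [hx, formula_eq hi]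

theorem fredholm_step_polynomial_calculus_general [DecidableEq ι]
    (hs : ∀ i, MeasurableSet (s i)) (hdisj : Pairwise (Function.onFun Disjoint s))
    (hcover : ∀ᵐ x ∂μ, ∃ i, x ∈ s i) (h0 : ∀ i, μ (s i) ≠ 0) (hfin : ∀ i, μ (s i) ≠ ∞)
    (A : ι → 𝕜) (B : Matrix ι ι 𝕜) (T : Lp 𝕜 p μ →L[𝕜] Lp 𝕜 p μ)
    (hT : ∀ u, T u =ᵐ[μ] stepFormula μ s A B u) (f : Polynomial 𝕜) (u : Lp 𝕜 p μ) :
    f.aeval T u =ᵐ[μ] stepFormula μ s (f.aeval A)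
      (f.aeval (Matrix.diagonal A + B) - f.aeval (Matrix.diagonal A)) u := by
  have T_acts : ActsOnCells s T A (Matrix.diagonal A + B) :=
    (actsOnCells_iff_ae_eq_stepFormula hs hdisj hcover hfin).2 hT
  refine (actsOnCells_iff_ae_eq_stepFormula hs hdisj hcover hfin).1 ?_ u
  simpa only [aeval_diagonal, add_sub_cancel] using T_acts.aeval h0 hfin f

end StepOperators

section UnitInterval

variable {S : ℕ}

/-- The `i`-th of the `S` subintervals of `[0,1)` of length `1 / S`, counted from `0`. -/
def cell (S : ℕ) (i : Fin S) : Set ℝ := Set.Ico ((i : ℝ) / S) (((i : ℝ) + 1) / S)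

lemma measurableSet_cell (i : Fin S) : MeasurableSet (cell S i) :=
  measurableSet_Ico

lemma mem_cell_iff_floor_eq {i : Fin S} {x : ℝ} (hx : 0 ≤ x) : x ∈ cell S i ↔ ⌊x * S⌋₊ = i := by
  have S_pos : (0 : ℝ) < S := Nat.cast_pos.2 i.pos
  rw [cell, Set.mem_Ico, div_le_iff₀ S_pos, lt_div_iff₀ S_pos, Nat.floor_eq_iff (by positivity)]

lemma cell_subset_Ico (i : Fin S) : cell S i ⊆ Set.Ico 0 1 := by
  refine Set.Ico_subset_Ico (by positivity) ((div_le_one (Nat.cast_pos.2 i.pos)).2 ?_)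
  exact_mod_cast i.isLt

lemma pairwise_disjoint_cell : Pairwise (Function.onFun Disjoint (cell S)) := by
  refine fun i j hij => Set.disjoint_left.2 fun x hi hj => hij (Fin.ext ?_)
  have x_nonneg : 0 ≤ x := (cell_subset_Ico i hi).1
  rw [← (mem_cell_iff_floor_eq x_nonneg).1 hi, (mem_cell_iff_floor_eq x_nonneg).1 hj]

lemma exists_mem_cell (hS : 1 ≤ S) {x : ℝ} (hx : x ∈ Set.Ico (0 : ℝ) 1) : ∃ i, x ∈ cell S i := by
  have S_pos : (0 : ℝ) < S := Nat.cast_pos.2 hS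
  have floor_lt : ⌊x * S⌋₊ < S :=
    (Nat.floor_lt (mul_nonneg hx.1 S_pos.le)).2 (mul_lt_of_lt_one_left S_pos hx.2)
  exact ⟨⟨⌊x * S⌋₊, floor_lt⟩, (mem_cell_iff_floor_eq hx.1).2 rfl⟩

lemma volume_restrict_cell (i : Fin S) :
    volume.restrict (Set.Ico (0 : ℝ) 1) (cell S i) = (S : ℝ≥0∞)⁻¹ := by
  rw [Measure.restrict_eq_self _ (cell_subset_Ico i), cell, Real.volume_Ico, ← sub_div,
    add_sub_cancel_left, one_div, ENNReal.ofReal_inv_of_pos (Nat.cast_pos.2 i.pos),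
    ENNReal.ofReal_natCast]

lemma volume_restrict_cell_ne_zero (i : Fin S) :
    volume.restrict (Set.Ico (0 : ℝ) 1) (cell S i) ≠ 0 := by
  rw [volume_restrict_cell]
  exact ENNReal.inv_ne_zero.2 (ENNReal.natCast_ne_top S)

lemma chi_eq_indicator_cell (i : Fin S) : chi S i = (cell S i).indicator 1 := by
  ext x
  simp only [chi, cell, Set.indicator_apply, Pi.one_apply]

lemma stepFormula_cell (D : Fin S → ℂ) (K : Matrix (Fin S) (Fin S) ℂ) (u : ℝ → ℂ) (x : ℝ) :
    stepFormula (volume.restrict (Set.Ico 0 1)) (cell S) D K u x =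
      (∑ i, D i * chi S i x) * u x + ∫ y in Set.Ico (0 : ℝ) 1,
        ((S : ℂ) * ∑ i, ∑ j, chi S i x * K i j * chi S j y) * u y := by
  simp only [stepFormula, measureReal_def, volume_restrict_cell, chi_eq_indicator_cell,
    ENNReal.toReal_inv, ENNReal.toReal_natCast, RCLike.ofReal_inv, RCLike.ofReal_natCast, inv_inv,
    Finset.mul_sum, mul_left_comm (S : ℂ), mul_assoc]

lemma Tformula_eq_stepFormula (A : Fin S → ℂ) (B : Fin S → Fin S → ℂ) (u : ℝ → ℂ) :
    Tformula S A B u =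
      stepFormula (volume.restrict (Set.Ico 0 1)) (cell S) A (Matrix.of B) u := by
  ext x
  simp only [Tformula, stepFormula_cell, Matrix.of_apply, mul_comm (B _ _)]

lemma sum_chi_mul_diagonal_mul_chi (D : Fin S → ℂ) (x : ℝ) :
    ∑ i, ∑ j, chi S i x * Matrix.diagonal D i j * chi S j x = ∑ i, D i * chi S i x := by
  have chi_mul_self (i : Fin S) : chi S i x * chi S i x = chi S i x := by
    simp [chi]
  simp [Matrix.diagonal_apply, mul_right_comm _ (D _), chi_mul_self, mul_comm (D _)]

end UnitInterval

/-- For every complex polynomial `f`, the operator `f(𝒜)`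
acts by `f(𝒜)u(x) = χᵀ(x)f(𝐀)χ(x)u(x) + S∫₀¹ χᵀ(x)(f(𝐀+𝐁) − f(𝐀))χ(y)u(y)dy`,
where `f(𝐀)`, `f(𝐀+𝐁)` are the matrix evaluations of `f`. -/
theorem fredholm_step_polynomial_calculus (S : ℕ) (hS : 1 ≤ S)
    (A : Fin S → ℂ) (B : Fin S → Fin S → ℂ)
    (T : Lp ℂ 2 (volume.restrict (Set.Ico (0 : ℝ) 1)) →L[ℂ]
      Lp ℂ 2 (volume.restrict (Set.Ico (0 : ℝ) 1)))
    (hT : ∀ u : Lp ℂ 2 (volume.restrict (Set.Ico (0 : ℝ) 1)),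
      (T u : ℝ → ℂ) =ᵐ[volume.restrict (Set.Ico (0 : ℝ) 1)]
        Tformula S A B (u : ℝ → ℂ))
    (f : Polynomial ℂ) :
    ∀ u : Lp ℂ 2 (volume.restrict (Set.Ico (0 : ℝ) 1)),
      ((Polynomial.aeval T f) u : ℝ → ℂ)
        =ᵐ[volume.restrict (Set.Ico (0 : ℝ) 1)]
          fun x =>
            (∑ i, ∑ j, chi S i x *
                (Polynomial.aeval (Matrix.diagonal A) f) i j * chi S j x) *
              (u : ℝ → ℂ) x +
            ∫ y in Set.Ico (0 : ℝ) 1,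
              ((S : ℂ) * ∑ i, ∑ j, chi S i x *
                  (Polynomial.aeval (Matrix.diagonal A + Matrix.of B) f -
                    Polynomial.aeval (Matrix.diagonal A) f) i j * chi S j y) *
                (u : ℝ → ℂ) y := by
  simp only [Tformula_eq_stepFormula] at hT
  simpa only [aeval_diagonal, sum_chi_mul_diagonal_mul_chi, ← stepFormula_cell] using
    fredholm_step_polynomial_calculus_general measurableSet_cell pairwise_disjoint_cell
      (ae_restrict_of_forall_mem measurableSet_Ico fun _ => exists_mem_cell hS)
      volume_restrict_cell_ne_zero (fun _ => measure_ne_top _ _) A (Matrix.of B) T hT f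

end Stmt19
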